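/- Let ν₁ and ν₂ be Borel probability measures on ℝ with finite first moments, let ε ≥ 0, and define the follower value V(ν) = inf { ∫ log σ dα : α ∈ U_ε(ν) } for a Borel probability measure ν on ℝ with finite first moment. Then for every coupling γ₀ of ν₁ and ν₂, |V(ν₁) − V(ν₂)| ≤ ∫ |x-y| dγ₀(x,y). In particular, the follower value function is 1-Lipschitz with respect to the 1-Wasserstein distance between centers. -/

import Mathlib

open MeasureTheory ENNReal Real

/-- The logistic sigmoid σ(x) = 1/(1+e^{-x}). -/
noncomputable def logisticSigma (x : ℝ) : ℝ := 1 / (1 + Real.exp (-x))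

/-- The logistic loss ℓ(ξ) = -log σ(ξ) = log(1+e^{-ξ}). -/
noncomputable def logisticLoss (x : ℝ) : ℝ := Real.log (1 + Real.exp (-x))

/-- γ is a coupling of α and β: its marginals are α and β. -/
def IsCoupling (γ : Measure (ℝ × ℝ)) (α β : Measure ℝ) : Prop :=
  γ.map Prod.fst = α ∧ γ.map Prod.snd = β

/-- Transport cost of a coupling: ∫ |x - y| dγ(x,y). -/
noncomputable def transportCost (γ : Measure (ℝ × ℝ)) : ℝ≥0∞ :=
  ∫⁻ p, ENNReal.ofReal |p.1 - p.2| ∂γ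

/-- The 1-Wasserstein ε-ball around ν: Borel probability measures admitting a
coupling with ν of transport cost at most ε. -/
def Uball (ε : ℝ) (ν : Measure ℝ) : Set (Measure ℝ) :=
  {α | IsProbabilityMeasure α ∧
    ∃ γ : Measure (ℝ × ℝ), IsCoupling γ α ν ∧ transportCost γ ≤ ENNReal.ofReal ε}

/-!
A competitor `α` for `ν₁` is moved to a competitor for `ν₂` by a parallelogram: glue a coupling of
`(α, ν₁)` and the coupling `γ₀` of `(ν₁, ν₂)` into a joint law of `(X, Y, Z)`, and let `α'` be the
law of `X + (Z - Y)`. Since `X + (Z - Y) - Z = X - Y`, the distance budget of the ball is preserved,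
and since `X + (Z - Y) - X = Z - Y`, the measures `α` and `α'` are coupled at the cost of `γ₀`.
Hence the integral of a `K`-Lipschitz function changes by at most `K` times that cost, and `log σ`
is 1-Lipschitz because its derivative is `1 - σ`.
-/

open ProbabilityTheory

open scoped NNReal

section Couplings

variable {X Y Z : Type*} [MeasurableSpace X] [MeasurableSpace Y] [MeasurableSpace Z]

/-- `γ` is a coupling of `α` and `β`; this is `IsCoupling` with arbitrary measurable spaces in place
of `ℝ`, so that couplings can be glued and taken on any normed space. -/
structure HasMarginals (γ : Measure (X × Y)) (α : Measure X) (β : Measure Y) : Prop where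
  fst_eq : γ.fst = α
  snd_eq : γ.snd = β

namespace HasMarginals

variable {γ : Measure (X × Y)} {α : Measure X} {β : Measure Y}

theorem swap (hγ : HasMarginals γ α β) : HasMarginals (γ.map Prod.swap) β α :=
  ⟨by rw [Measure.fst_map_swap, hγ.snd_eq], by rw [Measure.snd_map_swap, hγ.fst_eq]⟩

theorem isProbabilityMeasure [IsProbabilityMeasure α] (hγ : HasMarginals γ α β) :
    IsProbabilityMeasure γ := by
  obtain rfl := hγ.fst_eq
  have : IsProbabilityMeasure (γ.map Prod.fst) := ‹IsProbabilityMeasure γ.fst›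
  exact Measure.isProbabilityMeasure_of_map Prod.fst

theorem isProbabilityMeasure_right [IsProbabilityMeasure α] (hγ : HasMarginals γ α β) :
    IsProbabilityMeasure β :=
  have := hγ.isProbabilityMeasure
  hγ.snd_eq ▸ inferInstance

theorem integrable_comp_fst {F : Type*} [NormedAddCommGroup F] {f : X → F}
    (hγ : HasMarginals γ α β) (hf : Integrable f α) : Integrable (fun p => f p.1) γ := by
  obtain rfl := hγ.fst_eq
  exact hf.comp_measurable measurable_fst

theorem integral_comp_fst {F : Type*} [NormedAddCommGroup F] [NormedSpace ℝ F] {f : X → F}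
    (hγ : HasMarginals γ α β) (hf : AEStronglyMeasurable f α) :
    ∫ p, f p.1 ∂γ = ∫ x, f x ∂α := by
  obtain rfl := hγ.fst_eq
  exact (integral_map measurable_fst.aemeasurable hf).symm

theorem integrable_comp_snd {F : Type*} [NormedAddCommGroup F] {f : Y → F}
    (hγ : HasMarginals γ α β) (hf : Integrable f β) : Integrable (fun p => f p.2) γ := by
  obtain rfl := hγ.snd_eq
  exact hf.comp_measurable measurable_snd

theorem integral_comp_snd {F : Type*} [NormedAddCommGroup F] [NormedSpace ℝ F] {f : Y → F}
    (hγ : HasMarginals γ α β) (hf : AEStronglyMeasurable f β) :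
    ∫ p, f p.2 ∂γ = ∫ y, f y ∂β := by
  obtain rfl := hγ.snd_eq
  exact (integral_map measurable_snd.aemeasurable hf).symm

end HasMarginals

theorem hasMarginals_map_prodMk {Ω : Type*} [MeasurableSpace Ω] (P : Measure Ω) {u : Ω → X}
    {v : Ω → Y} (hu : Measurable u) (hv : Measurable v) :
    HasMarginals (P.map fun ω => (u ω, v ω)) (P.map u) (P.map v) :=
  ⟨Measure.fst_map_prodMk hv, Measure.snd_map_prodMk hu⟩

theorem map_prodMap_id_compProd_comap {μ : Measure X} [SFinite μ] {g : X → Y} (hg : Measurable g)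
    (κ : Kernel Y Z) [IsSFiniteKernel κ] :
    (μ ⊗ₘ κ.comap g hg).map (Prod.map g id) = μ.map g ⊗ₘ κ := by
  ext s hs
  have hgid : Measurable (Prod.map g id : X × Z → Y × Z) := hg.prodMap measurable_id
  rw [Measure.map_apply hgid hs, Measure.compProd_apply (hgid hs), Measure.compProd_apply hs,
    lintegral_map (Kernel.measurable_kernel_prodMk_left hs) hg]
  rfl

theorem exists_gluing [StandardBorelSpace Z] [Nonempty Z] {γ₁ : Measure (X × Y)} [SFinite γ₁]
    {γ₂ : Measure (Y × Z)} [IsFiniteMeasure γ₂] (h : γ₁.snd = γ₂.fst) :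
    ∃ P : Measure ((X × Y) × Z), P.fst = γ₁ ∧ P.map (Prod.map Prod.snd id) = γ₂ := by
  refine ⟨γ₁ ⊗ₘ γ₂.condKernel.comap Prod.snd measurable_snd, Measure.fst_compProd _ _, ?_⟩
  rw [map_prodMap_id_compProd_comap, ← Measure.snd, h, γ₂.disintegrate]

end Couplings

section TransportCost

variable {X : Type*} [PseudoEMetricSpace X] [MeasurableSpace X]

/-- The transport cost `∫ d(x, y) dγ(x, y)` of a coupling of two measures on an extended metric
space, with values in `[0, ∞]`. On `ℝ` this is `transportCost`. -/
noncomputable def edistCost (γ : Measure (X × X)) : ℝ≥0∞ := ∫⁻ p, edist p.1 p.2 ∂γ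

/-- The 1-Wasserstein ball of radius `r` around `ν`: the probability measures admitting a coupling
with `ν` of transport cost at most `r`. On `ℝ` this is `Uball`. -/
def wassersteinBall (r : ℝ≥0∞) (ν : Measure X) : Set (Measure X) :=
  {α | IsProbabilityMeasure α ∧ ∃ γ, HasMarginals γ α ν ∧ edistCost γ ≤ r}

/-- The follower's optimal value over the Wasserstein ball of radius `r` around `ν`, for an
arbitrary integrand `f`. It is a real infimum, hence only meaningful when the integrals of `f` over
the ball are bounded below. -/
noncomputable def followerValue (r : ℝ≥0∞) (f : X → ℝ) (ν : Measure X) : ℝ :=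
  sInf ((fun α => ∫ x, f x ∂α) '' wassersteinBall r ν)

theorem edistCost_map_swap (γ : Measure (X × X)) : edistCost (γ.map Prod.swap) = edistCost γ :=
  (lintegral_map_equiv (fun p : X × X => edist p.1 p.2) MeasurableEquiv.prodComm).trans
    (lintegral_congr fun p => edist_comm p.2 p.1)

variable [OpensMeasurableSpace X] [SecondCountableTopology X]

theorem edistCost_map_prodMk {Ω : Type*} [MeasurableSpace Ω] (P : Measure Ω) {u v : Ω → X}
    (hu : Measurable u) (hv : Measurable v) :
    edistCost (P.map fun ω => (u ω, v ω)) = ∫⁻ ω, edist (u ω) (v ω) ∂P :=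
  lintegral_map measurable_edist (hu.prodMk hv)

theorem mem_wassersteinBall_self (r : ℝ≥0∞) (ν : Measure X) [IsProbabilityMeasure ν] :
    ν ∈ wassersteinBall r ν := by
  refine ⟨inferInstance, ν.map fun x => (x, x), ?_, ?_⟩
  · simpa using hasMarginals_map_prodMk ν measurable_id measurable_id
  · simp [edistCost_map_prodMk ν measurable_id' measurable_id']

end TransportCost

section Infimum

theorem csInf_le_csInf_add {G : Type*} [ConditionallyCompleteLattice G] [AddGroup G]
    [AddRightMono G] {s t : Set G} {c : G} (hs : s.Nonempty) (ht : BddBelow t)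
    (h : ∀ a ∈ s, ∃ b ∈ t, b ≤ a + c) : sInf t ≤ sInf s + c := by
  rw [← sub_le_iff_le_add]
  refine le_csInf hs fun a ha => ?_
  obtain ⟨b, hb, hba⟩ := h a ha
  exact sub_le_iff_le_add.2 ((csInf_le ht hb).trans hba)

theorem edist_le_iff_abs_sub_le_toReal {a b : ℝ} {c : ℝ≥0∞} (hc : c ≠ ∞) :
    edist a b ≤ c ↔ |a - b| ≤ c.toReal := by
  rw [edist_dist, ENNReal.ofReal_le_iff_le_toReal hc, Real.dist_eq]

end Infimum

section Lipschitz

variable {X F : Type*} [PseudoEMetricSpace X] [MeasurableSpace X] [NormedAddCommGroup F]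
  {f : X → F} {K : ℝ≥0} {α β : Measure X} {γ : Measure (X × X)}

theorem lintegral_edist_comp_le {Y : Type*} [PseudoEMetricSpace Y] {f : X → Y}
    (hf : LipschitzWith K f) (γ : Measure (X × X)) :
    ∫⁻ p, edist (f p.1) (f p.2) ∂γ ≤ K * edistCost γ :=
  calc ∫⁻ p, edist (f p.1) (f p.2) ∂γ
    _ ≤ ∫⁻ p, K * edist p.1 p.2 ∂γ := lintegral_mono fun p => hf p.1 p.2
    _ = K * edistCost γ := lintegral_const_mul' _ _ ENNReal.coe_ne_top

theorem HasMarginals.edist_integral_le [NormedSpace ℝ F] (hγ : HasMarginals γ α β)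
    (hf : LipschitzWith K f) (hα : Integrable f α) (hβ : Integrable f β) :
    edist (∫ x, f x ∂α) (∫ x, f x ∂β) ≤ K * edistCost γ := by
  rw [← hγ.integral_comp_fst hα.1, ← hγ.integral_comp_snd hβ.1]
  exact (edist_integral_le_lintegral_edist (hγ.integrable_comp_fst hα)
    (hγ.integrable_comp_snd hβ)).trans (lintegral_edist_comp_le hf γ)

theorem HasMarginals.integrable_right [OpensMeasurableSpace X] [SecondCountableTopology X]
    (hγ : HasMarginals γ α β) (hf : LipschitzWith K f) (hcost : K * edistCost γ ≠ ∞)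
    (hα : Integrable f α) : Integrable f β := by
  have hmeas (μ : Measure X) : AEStronglyMeasurable f μ := hf.continuous.aestronglyMeasurable
  obtain rfl := hγ.snd_eq
  have hfst : Integrable (fun p => f p.1) γ := hγ.integrable_comp_fst hα
  have hsub : Integrable (fun p => f p.1 - f p.2) γ := by
    refine ⟨hfst.1.sub ((hmeas _).comp_measurable measurable_snd), ?_⟩
    simpa only [hasFiniteIntegral_iff_enorm, ← edist_eq_enorm_sub] using
      (lintegral_edist_comp_le hf γ).trans_lt hcost.lt_top
  refine (integrable_map_measure (hmeas _) measurable_snd.aemeasurable).2 ?_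
  exact (hfst.sub hsub).congr (.of_forall fun p => sub_sub_cancel (f p.1) (f p.2))

theorem integrable_of_lipschitzWith {E : Type*} [NormedAddCommGroup E] [MeasurableSpace E]
    [OpensMeasurableSpace E] [SecondCountableTopology E] {f : E → F} {ν : Measure E}
    [IsFiniteMeasure ν] (hf : LipschitzWith K f) (hν : Integrable (fun x => ‖x‖) ν) :
    Integrable f ν := by
  refine ((hν.const_mul K).add (integrable_const ‖f 0‖)).mono'
    hf.continuous.aestronglyMeasurable (.of_forall fun x => ?_)
  calc ‖f x‖
    _ ≤ ‖f x - f 0‖ + ‖f 0‖ := norm_le_norm_sub_add _ _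
    _ ≤ K * ‖x‖ + ‖f 0‖ := by gcongr; simpa using hf.norm_sub_le x 0

end Lipschitz

section WassersteinBall

variable {X : Type*} [PseudoEMetricSpace X] [MeasurableSpace X] [OpensMeasurableSpace X]
  [SecondCountableTopology X] {f : X → ℝ} {K : ℝ≥0} {r : ℝ≥0∞} {α ν : Measure X}

theorem integrable_of_mem_wassersteinBall (hr : r ≠ ∞) (hf : LipschitzWith K f)
    (hν : Integrable f ν) (hα : α ∈ wassersteinBall r ν) : Integrable f α := by
  obtain ⟨-, γ, hγ, hcost⟩ := hα
  refine hγ.swap.integrable_right hf ?_ hν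
  rw [edistCost_map_swap]
  exact ENNReal.mul_ne_top ENNReal.coe_ne_top (ne_top_of_le_ne_top hr hcost)

theorem bddBelow_integral_wassersteinBall (hr : r ≠ ∞) (hf : LipschitzWith K f)
    (hν : Integrable f ν) : BddBelow ((fun α => ∫ x, f x ∂α) '' wassersteinBall r ν) := by
  refine ⟨∫ x, f x ∂ν - (K * r).toReal, ?_⟩
  rintro _ ⟨α, hα, rfl⟩
  have hfα := integrable_of_mem_wassersteinBall hr hf hν hα
  obtain ⟨-, γ, hγ, hcost⟩ := hα
  have hdist : edist (∫ x, f x ∂α) (∫ x, f x ∂ν) ≤ K * r :=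
    (hγ.edist_integral_le hf hfα hν).trans (by gcongr)
  rw [edist_le_iff_abs_sub_le_toReal (ENNReal.mul_ne_top ENNReal.coe_ne_top hr)] at hdist
  exact sub_le_of_abs_sub_le_left hdist

end WassersteinBall

section Parallelogram

variable {E : Type*} [NormedAddCommGroup E] [MeasurableSpace E] [BorelSpace E]
  [SecondCountableTopology E] [StandardBorelSpace E] {α ν₁ ν₂ : Measure E} {γ γ₀ : Measure (E × E)}

theorem HasMarginals.exists_parallelogram [SFinite γ] [IsFiniteMeasure γ₀]
    (hγ : HasMarginals γ α ν₁) (hγ₀ : HasMarginals γ₀ ν₁ ν₂) :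
    ∃ (α' : Measure E) (γ' γ₀' : Measure (E × E)),
      HasMarginals γ' α' ν₂ ∧ edistCost γ' = edistCost γ ∧
      HasMarginals γ₀' α α' ∧ edistCost γ₀' = edistCost γ₀ := by
  obtain ⟨P, rfl, rfl⟩ := exists_gluing (hγ.snd_eq.trans hγ₀.fst_eq.symm)
  let x : (E × E) × E → E := fun p => p.1.1
  let y : (E × E) × E → E := fun p => p.1.2
  let z : (E × E) × E → E := Prod.snd
  have hx : Measurable x := by fun_prop
  have hy : Measurable y := by fun_prop
  have hz : Measurable z := by fun_prop
  have hw : Measurable (x + (z - y)) := by fun_prop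
  have hα : α = P.map x := by
    rw [← hγ.fst_eq]; exact Measure.map_map measurable_fst measurable_fst
  have hν₂ : ν₂ = P.map z := by
    rw [← hγ₀.snd_eq]; exact Measure.map_map measurable_snd (by fun_prop)
  refine ⟨P.map (x + (z - y)), P.map fun p => ((x + (z - y)) p, z p),
    P.map fun p => (x p, (x + (z - y)) p), ?_, ?_, ?_, ?_⟩
  · exact hν₂ ▸ hasMarginals_map_prodMk P hw hz
  · have hdist (p) : edist ((x + (z - y)) p) (z p) = edist (x p) (y p) := by
      simp [edist_eq_enorm_sub, add_sub_right_comm]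
    simp only [edistCost_map_prodMk P hw hz, hdist]
    exact (edistCost_map_prodMk P hx hy).symm
  · exact hα ▸ hasMarginals_map_prodMk P hx hw
  · have hdist (p) : edist (x p) ((x + (z - y)) p) = edist (y p) (z p) := by
      simp [edist_eq_enorm_sub]
    simp only [edistCost_map_prodMk P hx hw, hdist]
    exact (edistCost_map_prodMk P hy hz).symm

theorem exists_mem_wassersteinBall_edistCost_eq {r : ℝ≥0∞} (hα : α ∈ wassersteinBall r ν₁)
    (hγ₀ : HasMarginals γ₀ ν₁ ν₂) :
    ∃ α' ∈ wassersteinBall r ν₂, ∃ γ₀', HasMarginals γ₀' α α' ∧ edistCost γ₀' = edistCost γ₀ := by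
  obtain ⟨_, γ, hγ, hcost⟩ := hα
  have := hγ.isProbabilityMeasure
  have := hγ.isProbabilityMeasure_right
  have := hγ₀.isProbabilityMeasure
  obtain ⟨α', γ', γ₀', hγ', hcost', hγ₀', hcost₀'⟩ := hγ.exists_parallelogram hγ₀
  exact ⟨α', ⟨hγ₀'.isProbabilityMeasure_right, γ', hγ', hcost'.trans_le hcost⟩,
    γ₀', hγ₀', hcost₀'⟩

theorem exists_mem_wassersteinBall_edist_integral_le {f : E → ℝ} {K : ℝ≥0} {r : ℝ≥0∞} (hr : r ≠ ∞)
    (hf : LipschitzWith K f) (hν₁ : Integrable f ν₁) (hν₂ : Integrable f ν₂)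
    (hγ₀ : HasMarginals γ₀ ν₁ ν₂) (hα : α ∈ wassersteinBall r ν₁) :
    ∃ α' ∈ wassersteinBall r ν₂, edist (∫ x, f x ∂α) (∫ x, f x ∂α') ≤ K * edistCost γ₀ := by
  obtain ⟨α', hα', γ₀', hγ₀', hcost⟩ := exists_mem_wassersteinBall_edistCost_eq hα hγ₀
  exact ⟨α', hα', hcost ▸ hγ₀'.edist_integral_le hf
    (integrable_of_mem_wassersteinBall hr hf hν₁ hα)
    (integrable_of_mem_wassersteinBall hr hf hν₂ hα')⟩

theorem followerValue_le_add {f : E → ℝ} {K : ℝ≥0} {r : ℝ≥0∞} [IsProbabilityMeasure ν₁]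
    (hr : r ≠ ∞) (hf : LipschitzWith K f) (hν₁ : Integrable f ν₁) (hγ₀ : HasMarginals γ₀ ν₁ ν₂)
    (hcost : K * edistCost γ₀ ≠ ∞) :
    followerValue r f ν₂ ≤ followerValue r f ν₁ + (K * edistCost γ₀).toReal := by
  have hν₂ : Integrable f ν₂ := hγ₀.integrable_right hf hcost hν₁
  refine csInf_le_csInf_add ⟨_, ν₁, mem_wassersteinBall_self r ν₁, rfl⟩
    (bddBelow_integral_wassersteinBall hr hf hν₂) ?_
  rintro _ ⟨α, hα, rfl⟩
  obtain ⟨α', hα', hle⟩ := exists_mem_wassersteinBall_edist_integral_le hr hf hν₁ hν₂ hγ₀ hα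
  rw [edist_le_iff_abs_sub_le_toReal hcost] at hle
  exact ⟨_, ⟨α', hα', rfl⟩, sub_le_iff_le_add.1 (sub_le_of_abs_sub_le_left hle)⟩

theorem stmt15_general {f : E → ℝ} {K : ℝ≥0} {r : ℝ≥0∞} [IsProbabilityMeasure ν₁] (hr : r ≠ ∞)
    (hf : LipschitzWith K f) (hν₁ : Integrable f ν₁) (hγ₀ : HasMarginals γ₀ ν₁ ν₂) :
    edist (followerValue r f ν₁) (followerValue r f ν₂) ≤ K * edistCost γ₀ := by
  obtain hcost | hcost := eq_or_ne (K * edistCost γ₀) ∞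
  · exact hcost ▸ le_top
  have := hγ₀.isProbabilityMeasure_right
  have hν₂ : Integrable f ν₂ := hγ₀.integrable_right hf hcost hν₁
  have h₁₂ := followerValue_le_add hr hf hν₁ hγ₀ hcost
  have h₂₁ := followerValue_le_add hr hf hν₂ hγ₀.swap (by rwa [edistCost_map_swap])
  rw [edistCost_map_swap] at h₂₁
  rw [edist_le_iff_abs_sub_le_toReal hcost, abs_sub_le_iff, sub_le_iff_le_add', sub_le_iff_le_add']
  exact ⟨h₂₁, h₁₂⟩

end Parallelogram

section LogSigmoid

theorem logisticSigma_eq_sigmoid : logisticSigma = sigmoid :=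
  funext fun _ => one_div _

theorem hasDerivAt_log_sigmoid (x : ℝ) :
    HasDerivAt (fun x => log (sigmoid x)) (1 - sigmoid x) x := by
  simpa [mul_div_cancel_left₀ _ (sigmoid_pos x).ne'] using
    (hasDerivAt_sigmoid x).log (sigmoid_pos x).ne'

theorem lipschitzWith_log_sigmoid : LipschitzWith 1 fun x => log (sigmoid x) := by
  refine lipschitzWith_of_nnnorm_deriv_le (fun x => (hasDerivAt_log_sigmoid x).differentiableAt)
    fun x => ?_
  rw [(hasDerivAt_log_sigmoid x).deriv, ← NNReal.coe_le_coe, coe_nnnorm, Real.norm_eq_abs,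
    abs_of_pos (sub_pos.2 (sigmoid_lt_one x))]
  exact sub_le_self 1 (sigmoid_nonneg x)

end LogSigmoid

theorem transportCost_eq_edistCost (γ : Measure (ℝ × ℝ)) : transportCost γ = edistCost γ := by
  simp only [transportCost, edistCost, edist_dist, Real.dist_eq]

theorem isCoupling_iff_hasMarginals {γ : Measure (ℝ × ℝ)} {α β : Measure ℝ} :
    IsCoupling γ α β ↔ HasMarginals γ α β :=
  ⟨fun h => ⟨h.1, h.2⟩, fun h => ⟨h.fst_eq, h.snd_eq⟩⟩

theorem Uball_eq_wassersteinBall (ε : ℝ) (ν : Measure ℝ) :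
    Uball ε ν = wassersteinBall (ENNReal.ofReal ε) ν := by
  simp only [Uball, wassersteinBall, isCoupling_iff_hasMarginals, transportCost_eq_edistCost]

/-- the follower value V(ν) = inf over the ε-ball of the expected
log-likelihood is 1-Lipschitz in the center, in the sense that for every
coupling γ₀ of ν₁ and ν₂, |V(ν₁) − V(ν₂)| is bounded by the transport cost. -/
theorem stmt15 (ε : ℝ) (hε : 0 ≤ ε)
    (V : Measure ℝ → ℝ)
    (hV : ∀ ν : Measure ℝ,
      V ν = sInf ((fun α => ∫ x, Real.log (logisticSigma x) ∂α) '' Uball ε ν))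
    (ν₁ ν₂ : Measure ℝ)
    (h₁ : IsProbabilityMeasure ν₁) (h₂ : IsProbabilityMeasure ν₂)
    (hm₁ : Integrable (fun x : ℝ => |x|) ν₁)
    (hm₂ : Integrable (fun x : ℝ => |x|) ν₂)
    (γ₀ : Measure (ℝ × ℝ)) (hγ₀ : IsCoupling γ₀ ν₁ ν₂) :
    ENNReal.ofReal |V ν₁ - V ν₂| ≤ transportCost γ₀ := by
  have hf : LipschitzWith 1 fun x => log (logisticSigma x) :=
    logisticSigma_eq_sigmoid ▸ lipschitzWith_log_sigmoid
  have h := stmt15_general ENNReal.ofReal_ne_top hf (integrable_of_lipschitzWith hf hm₁)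
    (isCoupling_iff_hasMarginals.1 hγ₀) (r := ENNReal.ofReal ε)
  simpa [edist_dist, Real.dist_eq, hV, followerValue, Uball_eq_wassersteinBall,
    transportCost_eq_edistCost] using h
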